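/- Let D be a digraph on n vertices and let k ≥ 2·δ*_min(D) + 2 be an integer. Then the diameter of the k-dicolouring graph D_k(D) is at most (δ*_min(D) + 1)·n; indeed, between any two k-dicolourings of D there is a redicolouring sequence in which every vertex is recoloured at most δ*_min(D) + 1 times. -/

import Mathlib

/-- A relation (digraph) is acyclic if no vertex lies on a directed cycle. -/
def RelAcyclic {V : Type} (r : V → V → Prop) : Prop :=
  ∀ v, ¬ Relation.TransGen r v v

/-- `α` is a `k`-dicolouring of the digraph `D`: each colour class induces
an acyclic subdigraph. -/
def IsDicolouring {V : Type} (D : V → V → Prop) (k : ℕ) (α : V → Fin k) : Prop :=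
  ∀ c : Fin k, RelAcyclic (fun u v => D u v ∧ α u = c ∧ α v = c)

/-- Two colourings differ on exactly one vertex. -/
def RecolAdj {V : Type} {k : ℕ} (α β : V → Fin k) : Prop :=
  ∃ v, α v ≠ β v ∧ ∀ w, w ≠ v → α w = β w

/-- A single edge of the `k`-dicolouring graph `D_k(D)`. -/
def RecolStep {V : Type} (D : V → V → Prop) (k : ℕ) (α β : V → Fin k) : Prop :=
  IsDicolouring D k α ∧ IsDicolouring D k β ∧ RecolAdj α β

/-- The digraph `D` is `k`-mixing: the `k`-dicolouring graph is connected. -/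
def Mixing {V : Type} (D : V → V → Prop) (k : ℕ) : Prop :=
  ∀ α β : V → Fin k, IsDicolouring D k α → IsDicolouring D k β →
    Relation.ReflTransGen (RecolStep D k) α β

/-- Out-degree of `v` in the subdigraph of `D` induced by `S`. -/
noncomputable def outDegOn {V : Type} (D : V → V → Prop) (S : Set V) (v : V) : ℕ :=
  {w ∈ S | D v w}.ncard

/-- In-degree of `v` in the subdigraph of `D` induced by `S`. -/
noncomputable def inDegOn {V : Type} (D : V → V → Prop) (S : Set V) (v : V) : ℕ :=
  {w ∈ S | D w v}.ncard

/-- An oriented graph: a digraph with no digon (hence also no loop). -/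
def Oriented {V : Type} (D : V → V → Prop) : Prop :=
  ∀ u v, D u v → ¬ D v u

/-- A walk of length `m` in the `k`-dicolouring graph (a redicolouring sequence):
consecutive dicolourings differ on exactly one vertex. -/
def RecolWalk {V : Type} (D : V → V → Prop) (k m : ℕ) (γ : ℕ → V → Fin k) : Prop :=
  (∀ i ≤ m, IsDicolouring D k (γ i)) ∧ ∀ i < m, RecolAdj (γ i) (γ (i + 1))

/-- A frozen `k`-dicolouring: no single vertex can be recoloured so as to
yield another `k`-dicolouring. -/
def FrozenDicolouring {V : Type} [DecidableEq V] (D : V → V → Prop) (k : ℕ)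
    (α : V → Fin k) : Prop :=
  IsDicolouring D k α ∧
    ∀ (v : V) (c : Fin k), c ≠ α v → ¬ IsDicolouring D k (Function.update α v c)

/-- The arc set of a digraph, as a set of ordered pairs. -/
def arcSet {V : Type} (D : V → V → Prop) : Set (V × V) := {p | D p.1 p.2}

/-- The arcs of `D` lying inside a set `S` of vertices. -/
def arcSetOn {V : Type} (D : V → V → Prop) (S : Set V) : Set (V × V) :=
  {p | p.1 ∈ S ∧ p.2 ∈ S ∧ D p.1 p.2}

/-!
Induct on the number of vertices: delete a vertex `v` having a set `N` of at most `d` out-neighbours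
(or in-neighbours), and take a redicolouring sequence of `D - v` recolouring each vertex at most
`d + 1` times, hence moving `N` at most `d * (d + 1)` times in total. As long as the colour of `v`
does not appear on `N`, no monochromatic cycle passes through `v`. When the colour of `v` has to
change, at most `d` colours appear on `N`, so `2 * d + 2` colours suffice to also avoid the colours
given by the next `d + 1` moves on `N`. Hence `d` recolourings of `v` carry it through the whole
sequence, and one more gives `v` its target colour.
-/

section Acyclicity

variable {V : Type} {r s : V → V → Prop}

/-- The subdigraph of `D` induced by `S`, encoded on the same vertex type: the vertices outside `S`
become isolated. In particular `inducedOn D {v}ᶜ` is `D - v`. -/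
def inducedOn (D : V → V → Prop) (S : Set V) : V → V → Prop :=
  fun u w => D u w ∧ u ∈ S ∧ w ∈ S

theorem inducedOn_univ (D : V → V → Prop) : inducedOn D Set.univ = D := by
  ext u w
  simp only [inducedOn, Set.mem_univ, and_true]

theorem inducedOn_inducedOn (D : V → V → Prop) (S T : Set V) :
    inducedOn (inducedOn D S) T = inducedOn D (S ∩ T) := by
  ext u w
  simp only [inducedOn, Set.mem_inter_iff]
  tauto

theorem RelAcyclic.mono (hs : RelAcyclic s) (hrs : ∀ u w, r u w → s u w) : RelAcyclic r :=
  fun v hv => hs v (Relation.TransGen.mono hrs _ _ hv)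

theorem RelAcyclic.swap (hr : RelAcyclic r) : RelAcyclic (Function.swap r) :=
  fun v hv => hr v (Relation.transGen_swap.mp hv)

theorem RelAcyclic.of_sink {v : V} (hv : ∀ w, ¬ r v w) (hr : RelAcyclic (inducedOn r {v}ᶜ)) :
    RelAcyclic r := by
  have ne_of_arc {a b : V} (hab : r a b) : a ≠ v := by
    rintro rfl
    exact hv b hab
  have path_avoids {a b c : V} (hab : Relation.TransGen r a b) (hbc : r b c) :
      Relation.TransGen (inducedOn r {v}ᶜ) a b := by
    induction hab generalizing c with
    | single hab => exact .single ⟨hab, ne_of_arc hab, ne_of_arc hbc⟩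
    | tail _ hbb' ih => exact (ih hbb').tail ⟨hbb', ne_of_arc hbb', ne_of_arc hbc⟩
  intro x hx
  obtain ⟨y, hxy, -⟩ := Relation.TransGen.head'_iff.mp hx
  exact hr x (path_avoids hx hxy)

theorem RelAcyclic.of_source {v : V} (hv : ∀ w, ¬ r w v) (hr : RelAcyclic (inducedOn r {v}ᶜ)) :
    RelAcyclic r :=
  (RelAcyclic.of_sink (r := Function.swap r) hv
    (hr.swap.mono fun _ _ h => ⟨h.1, h.2.2, h.2.1⟩)).swap

end Acyclicity

section Dicolouring

variable {V : Type} {D D' : V → V → Prop} {k : ℕ} {γ : V → Fin k} {v : V} {N : Finset V}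

/-- `N` contains all out-neighbours of `v` or all its in-neighbours, so that every directed cycle
through `v` meets `N`. -/
def Guards (D : V → V → Prop) (N : Finset V) (v : V) : Prop :=
  (∀ w, D v w → w ∈ N) ∨ ∀ w, D w v → w ∈ N

theorem exists_guards_of_min_degree_le [Finite V] (hD : ∀ u, ¬ D u u) {S : Set V} {d : ℕ}
    (hv : min (outDegOn D S v) (inDegOn D S v) ≤ d) :
    ∃ N : Finset V, v ∉ N ∧ N.card ≤ d ∧ Guards (inducedOn D S) N v := by
  rcases min_le_iff.mp hv with hout | hin
  · refine ⟨(Set.toFinite {w ∈ S | D v w}).toFinset, by simp [hD v], ?_, .inl fun w hw => ?_⟩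
    · rwa [← Set.ncard_eq_toFinset_card]
    · simpa using ⟨hw.2.2, hw.1⟩
  · refine ⟨(Set.toFinite {w ∈ S | D w v}).toFinset, by simp [hD v], ?_, .inr fun w hw => ?_⟩
    · rwa [← Set.ncard_eq_toFinset_card]
    · simpa using ⟨hw.2.1, hw.1⟩

theorem IsDicolouring.mono (hγ : IsDicolouring D k γ) (hD : ∀ u w, D' u w → D u w) :
    IsDicolouring D' k γ :=
  fun c => (hγ c).mono fun u w h => ⟨hD u w h.1, h.2⟩

theorem IsDicolouring.deleteVertex (hγ : IsDicolouring D k γ) (v : V) :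
    IsDicolouring (inducedOn D {v}ᶜ) k γ :=
  hγ.mono fun _ _ h => h.1

theorem IsDicolouring.deleteVertex_update [DecidableEq V]
    (hγ : IsDicolouring (inducedOn D {v}ᶜ) k γ) (c : Fin k) :
    IsDicolouring (inducedOn D {v}ᶜ) k (Function.update γ v c) := by
  refine fun a => (hγ a).mono fun u w ⟨huw, hu, hw⟩ => ⟨huw, ?_, ?_⟩
  · rwa [Function.update_of_ne huw.2.1] at hu
  · rwa [Function.update_of_ne huw.2.2] at hw

theorem IsDicolouring.of_deleteVertex (hγ : IsDicolouring (inducedOn D {v}ᶜ) k γ)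
    (hN : Guards D N v) (hv : ∀ w ∈ N, γ w ≠ γ v) : IsDicolouring D k γ := by
  intro c
  have hdel : RelAcyclic (inducedOn (fun u w => D u w ∧ γ u = c ∧ γ w = c) {v}ᶜ) :=
    (hγ c).mono fun _ _ ⟨⟨huw, hcol⟩, hne⟩ => ⟨⟨huw, hne⟩, hcol⟩
  rcases hN with hout | hin
  · exact hdel.of_sink fun w ⟨hvw, hcv, hcw⟩ => hv w (hout w hvw) (hcw.trans hcv.symm)
  · exact hdel.of_source fun w ⟨hwv, hcw, hcv⟩ => hv w (hin w hwv) (hcw.trans hcv.symm)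

theorem IsDicolouring.update_of_deleteVertex [DecidableEq V]
    (hγ : IsDicolouring (inducedOn D {v}ᶜ) k γ) (hN : Guards D N v) (hvN : v ∉ N) {c : Fin k}
    (hc : ∀ w ∈ N, γ w ≠ c) : IsDicolouring D k (Function.update γ v c) := by
  refine (hγ.deleteVertex_update c).of_deleteVertex hN fun w hw => ?_
  rw [Function.update_self, Function.update_of_ne (ne_of_mem_of_not_mem hw hvN)]
  exact hc w hw

end Dicolouring

section Colours

variable {V C : Type*} {γ : V → C} {N : Finset V}

theorem forall_update_ne [DecidableEq V] {c : C} (hc : ∀ w ∈ N, γ w ≠ c) {u : V} {x : C}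
    (hx : u ∈ N → x ≠ c) : ∀ w ∈ N, Function.update γ u x w ≠ c := by
  intro w hw
  rcases eq_or_ne w u with rfl | hwu
  · rw [Function.update_self]
    exact hx hw
  · rw [Function.update_of_ne hwu]
    exact hc w hw

theorem exists_colour_forall_ne_and_notMem_take [Fintype C] (γ : V → C) (N : Finset V)
    (l : List C) {j : ℕ} (h : N.card + j < Fintype.card C) :
    ∃ c, (∀ w ∈ N, γ w ≠ c) ∧ c ∉ l.take j := by
  classical
  have hcard : (N.image γ ∪ (l.take j).toFinset).card < (Finset.univ : Finset C).card := calc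
    (N.image γ ∪ (l.take j).toFinset).card
    _ ≤ (N.image γ).card + (l.take j).toFinset.card := Finset.card_union_le _ _
    _ ≤ N.card + j := add_le_add Finset.card_image_le
        ((l.take j).toFinset_card_le.trans (List.length_take_le j l))
    _ < (Finset.univ : Finset C).card := by rwa [Finset.card_univ]
  obtain ⟨c, -, hc⟩ := Finset.exists_mem_notMem_of_card_lt_card hcard
  simp only [Finset.mem_union, Finset.mem_image, List.mem_toFinset, not_or, not_exists,
    not_and] at hc
  exact ⟨c, hc⟩

end Colours

section Moves

variable {V C : Type*} [DecidableEq V]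

/-- The number of moves of `L` on the vertex `v`. -/
abbrev recolCount (v : V) (L : List (V × C)) : ℕ :=
  L.countP fun m => m.1 = v

/-- The colours given by the successive moves of `L` on vertices of `N`. -/
def coloursOn (N : Finset V) (L : List (V × C)) : List C :=
  (L.filter fun m => m.1 ∈ N).map Prod.snd

theorem coloursOn_cons (N : Finset V) (u : V) (c : C) (L : List (V × C)) :
    coloursOn N ((u, c) :: L) = if u ∈ N then c :: coloursOn N L else coloursOn N L := by
  by_cases hu : u ∈ N <;> simp [coloursOn, hu]

theorem length_coloursOn (N : Finset V) (L : List (V × C)) :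
    (coloursOn N L).length = ∑ w ∈ N, recolCount w L := by
  induction L with
  | nil => simp [coloursOn]
  | cons m L ih =>
    rw [coloursOn_cons]
    by_cases hm : m.1 ∈ N <;> simp [hm, ih, List.countP_cons, Finset.sum_add_distrib]

theorem length_eq_sum_recolCount [Fintype V] (L : List (V × C)) :
    L.length = ∑ v, recolCount v L := by
  simp [← length_coloursOn, coloursOn]

end Moves

section Recolouring

variable {V : Type} [DecidableEq V] {D : V → V → Prop} {k : ℕ} {γ δ : V → Fin k}

/-- `RecolSeq D γ L δ`: performing the moves `(u, c)` of `L` in order, each of which gives the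
colour `c` to the vertex `u`, leads from `γ` to `δ` through `k`-dicolourings of `D`. A move may
repeat the current colour of its vertex. -/
inductive RecolSeq (D : V → V → Prop) : (V → Fin k) → List (V × Fin k) → (V → Fin k) → Prop
  | nil {γ : V → Fin k} (hγ : IsDicolouring D k γ) : RecolSeq D γ [] γ
  | cons {γ δ : V → Fin k} {u : V} {c : Fin k} {L : List (V × Fin k)} (hγ : IsDicolouring D k γ)
      (hL : RecolSeq D (Function.update γ u c) L δ) : RecolSeq D γ ((u, c) :: L) δ

theorem RecolSeq.concat {L : List (V × Fin k)} (hL : RecolSeq D γ L δ) {v : V} {c : Fin k}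
    (hc : IsDicolouring D k (Function.update δ v c)) :
    RecolSeq D γ (L ++ [(v, c)]) (Function.update δ v c) := by
  induction hL with
  | nil hγ => exact .cons hγ (.nil hc)
  | cons hγ _ ih => exact .cons hγ (ih hc)

end Recolouring

section Lifting

variable {V : Type} [DecidableEq V] {D : V → V → Prop} {k : ℕ} {γ δ : V → Fin k}
  {v : V} {c : Fin k} {r : ℕ} {L : List (V × Fin k)}

/-- The moves `L` leading from `γ` to `δ` in `D - v` can be interleaved with at most `r`
recolourings of `v` into a redicolouring sequence of `D` in which `v` initially has colour `c`. The
values of `γ` and `δ` at `v` are irrelevant. -/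
def Lifts (D : V → V → Prop) (v : V) (L : List (V × Fin k)) (γ δ : V → Fin k) (c : Fin k)
    (r : ℕ) : Prop :=
  ∃ (L' : List (V × Fin k)) (c' : Fin k),
    RecolSeq D (Function.update γ v c) L' (Function.update δ v c') ∧
    recolCount v L' ≤ r ∧ ∀ u ≠ v, recolCount u L' = recolCount u L

theorem Lifts.nil (hγ : IsDicolouring D k (Function.update γ v c)) : Lifts D v [] γ γ c r :=
  ⟨[], c, .nil hγ, by simp, by simp⟩

theorem Lifts.cons {u : V} {x : Fin k} (hγ : IsDicolouring D k (Function.update γ v c))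
    (huv : u ≠ v) (hL : Lifts D v L (Function.update γ u x) δ c r) :
    Lifts D v ((u, x) :: L) γ δ c r := by
  obtain ⟨L', c', hL', hv, hne⟩ := hL
  rw [Function.update_comm huv] at hL'
  refine ⟨(u, x) :: L', c', .cons hγ hL', ?_, fun w hw => ?_⟩
  · simpa [List.countP_cons, huv] using hv
  · simp [List.countP_cons, hne w hw]

theorem Lifts.recolour {c' : Fin k} (hγ : IsDicolouring D k (Function.update γ v c))
    (hL : Lifts D v L γ δ c' r) : Lifts D v L γ δ c (r + 1) := by
  obtain ⟨L', e, hL', hv, hne⟩ := hL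
  refine ⟨(v, c') :: L', e, .cons hγ (by rwa [Function.update_idem]), ?_, fun w hw => ?_⟩
  · simpa [List.countP_cons] using hv
  · simp [hne w hw, hw.symm]

variable {N : Finset V} {d : ℕ}

/-- The colour `c` serves `v` during the next `j` moves on `N`, after which each of the `r`
recolourings of `v` is good for another `d + 1` moves on `N`. -/
theorem RecolSeq.lifts_of_forall_ne (hk : 2 * d + 2 ≤ k) (hN : Guards D N v) (hvN : v ∉ N)
    (hNd : N.card ≤ d) (hL : RecolSeq (inducedOn D {v}ᶜ) γ L δ) (hvL : recolCount v L = 0)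
    {j : ℕ} (hc : ∀ w ∈ N, γ w ≠ c) (hcL : c ∉ (coloursOn N L).take j)
    (hlen : (coloursOn N L).length ≤ j + r * (d + 1)) : Lifts D v L γ δ c r := by
  induction hL generalizing c j r with
  | nil hγ => exact .nil (hγ.update_of_deleteVertex hN hvN hc)
  | @cons γ δ u x L hγ _ ih =>
    obtain ⟨hvL, huv⟩ : recolCount v L = 0 ∧ u ≠ v := by
      simpa [List.countP_cons] using hvL
    rw [coloursOn_cons] at hcL hlen
    by_cases huN : u ∈ N
    · rw [if_pos huN] at hcL hlen
      have lifts_of_ne {c : Fin k} {j r : ℕ} (hc : ∀ w ∈ N, γ w ≠ c)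
          (hcL : c ∉ (x :: coloursOn N L).take (j + 1))
          (hlen : (coloursOn N L).length ≤ j + r * (d + 1)) : Lifts D v ((u, x) :: L) γ δ c r := by
        rw [List.take_succ_cons, List.mem_cons, not_or] at hcL
        exact .cons (hγ.update_of_deleteVertex hN hvN hc) huv
          (ih hvL (forall_update_ne hc fun _ => Ne.symm hcL.1) hcL.2 hlen)
      rw [List.length_cons] at hlen
      rcases j with _ | j
      · obtain ⟨r, rfl⟩ : ∃ r', r = r' + 1 := Nat.exists_eq_succ_of_ne_zero (by rintro rfl; omega)
        obtain ⟨c', hc', hc'L⟩ := exists_colour_forall_ne_and_notMem_take γ N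
          (x :: coloursOn N L) (j := d + 1) (by rw [Fintype.card_fin]; omega)
        exact .recolour (hγ.update_of_deleteVertex hN hvN hc) (lifts_of_ne hc' hc'L (by grind))
      · exact lifts_of_ne hc hcL (by omega)
    · rw [if_neg huN] at hcL hlen
      exact .cons (hγ.update_of_deleteVertex hN hvN hc) huv
        (ih hvL (forall_update_ne hc fun hu => absurd hu huN) hcL hlen)

theorem RecolSeq.lifts (hk : 2 * d + 2 ≤ k) (hN : Guards D N v) (hvN : v ∉ N) (hNd : N.card ≤ d)
    (hL : RecolSeq (inducedOn D {v}ᶜ) γ L δ) (hvL : recolCount v L = 0)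
    (hNL : ∀ w ∈ N, recolCount w L ≤ d + 1) (hγ : IsDicolouring D k γ) :
    Lifts D v L γ δ (γ v) d := by
  have hlen : (coloursOn N L).length ≤ d * (d + 1) := calc
    (coloursOn N L).length = ∑ w ∈ N, recolCount w L := length_coloursOn N L
    _ ≤ N.card * (d + 1) := Finset.sum_le_card_nsmul _ _ _ hNL
    _ ≤ d * (d + 1) := Nat.mul_le_mul_right _ hNd
  by_cases hne : ∀ w ∈ N, γ w ≠ γ v
  · exact hL.lifts_of_forall_ne hk hN hvN hNd hvL (j := 0) hne (by simp) (by simpa using hlen)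
  · obtain ⟨w, hw, -⟩ : ∃ w ∈ N, γ w = γ v := by simpa using hne
    obtain ⟨d, rfl⟩ : ∃ d', d = d' + 1 :=
      Nat.exists_eq_succ_of_ne_zero ((Finset.card_pos.mpr ⟨w, hw⟩).trans_le hNd).ne'
    obtain ⟨c, hc, hcL⟩ := exists_colour_forall_ne_and_notMem_take γ N (coloursOn N L)
      (j := d + 1 + 1) (by rw [Fintype.card_fin]; omega)
    exact .recolour (by rwa [Function.update_eq_self])
      (hL.lifts_of_forall_ne hk hN hvN hNd hvL hc hcL (by grind))

end Lifting

section Existence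

variable {V : Type} [DecidableEq V] {D : V → V → Prop} {d k : ℕ} {α β : V → Fin k}

theorem exists_recolSeq_of_deleteVertex (hk : 2 * d + 2 ≤ k) {N : Finset V} {v : V}
    (hN : Guards D N v) (hvN : v ∉ N) (hNd : N.card ≤ d) (hα : IsDicolouring D k α)
    (hβ : IsDicolouring D k β) {L : List (V × Fin k)}
    (hL : RecolSeq (inducedOn D {v}ᶜ) α L (Function.update β v (α v))) (hvL : recolCount v L = 0)
    (hNL : ∀ w ∈ N, recolCount w L ≤ d + 1) :
    ∃ L' : List (V × Fin k), RecolSeq D α L' β ∧ recolCount v L' ≤ d + 1 ∧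
      ∀ u ≠ v, recolCount u L' = recolCount u L := by
  obtain ⟨L', c, hL', hv, hne⟩ := hL.lifts hk hN hvN hNd hvL hNL hα
  rw [Function.update_eq_self, Function.update_idem] at hL'
  have hlast := hL'.concat (v := v) (c := β v) (by simpa using hβ)
  rw [Function.update_idem, Function.update_eq_self] at hlast
  refine ⟨L' ++ [(v, β v)], hlast, by simpa using hv, fun u hu => ?_⟩
  simp [hne u hu, hu.symm]

theorem exists_recolSeq_inducedOn [Finite V] (hD : ∀ u, ¬ D u u)
    (hd : ∀ S : Set V, S.Nonempty → ∃ v ∈ S, min (outDegOn D S v) (inDegOn D S v) ≤ d)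
    (hk : 2 * d + 2 ≤ k) (S : Set V) (hα : IsDicolouring (inducedOn D S) k α)
    (hβ : IsDicolouring (inducedOn D S) k β) (hαβ : ∀ u ∉ S, α u = β u) :
    ∃ L : List (V × Fin k), RecolSeq (inducedOn D S) α L β ∧
      (∀ u, recolCount u L ≤ d + 1) ∧ ∀ u ∉ S, recolCount u L = 0 := by
  induction S using WellFoundedLT.induction generalizing β with
  | ind S ih =>
  rcases S.eq_empty_or_nonempty with rfl | hS
  · obtain rfl : α = β := funext fun u => hαβ u (Set.notMem_empty u)
    exact ⟨[], .nil hα, by simp, by simp⟩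
  obtain ⟨v, hvS, hdeg⟩ := hd S hS
  obtain ⟨N, hvN, hNd, hN⟩ := exists_guards_of_min_degree_le hD hdeg
  have hlt : S ∩ {v}ᶜ < S := inf_lt_left.mpr fun h => h hvS rfl
  obtain ⟨L, hL, hcount, hout⟩ := ih (S ∩ {v}ᶜ) hlt (β := Function.update β v (α v))
    (by simpa only [inducedOn_inducedOn] using hα.deleteVertex v)
    (by simpa only [inducedOn_inducedOn] using (hβ.deleteVertex v).deleteVertex_update (α v))
    (fun u hu => by
      rcases eq_or_ne u v with rfl | huv
      · rw [Function.update_self]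
      · rw [Function.update_of_ne huv]
        exact hαβ u fun huS => hu ⟨huS, huv⟩)
  rw [← inducedOn_inducedOn] at hL
  obtain ⟨L', hL', hv, hne⟩ := exists_recolSeq_of_deleteVertex hk hN hvN hNd hα hβ hL
    (hout v fun h => h.2 rfl) fun w _ => hcount w
  refine ⟨L', hL', fun u => ?_, fun u hu => ?_⟩
  · rcases eq_or_ne u v with rfl | huv
    · exact hv
    · exact (hne u huv).trans_le (hcount u)
  · rw [hne u (ne_of_mem_of_not_mem hvS hu).symm]
    exact hout u fun h => hu h.1

end Existence

section Walks

variable {V : Type} {D : V → V → Prop} {k m : ℕ} {α β : V → Fin k}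

theorem ncard_setOf_lt_and_eq_count (p : ℕ → Prop) [DecidablePred p] (m : ℕ) :
    {i | i < m ∧ p i}.ncard = Nat.count p m := by
  rw [Nat.count_eq_card_filter_range, ← Set.ncard_coe_finset]
  simp

theorem RecolWalk.cons {γ : ℕ → V → Fin k} (hγ : RecolWalk D k m γ) (hα : IsDicolouring D k α)
    (hadj : RecolAdj α (γ 0)) : RecolWalk D k (m + 1) (fun i => Nat.casesOn i α γ) := by
  constructor
  · rintro (_ | i) hi
    · exact hα
    · exact hγ.1 i (Nat.le_of_succ_le_succ hi)
  · rintro (_ | i) hi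
    · exact hadj
    · exact hγ.2 i (Nat.lt_of_succ_lt_succ hi)

theorem RecolSeq.exists_recolWalk [DecidableEq V] {L : List (V × Fin k)} (hL : RecolSeq D α L β) :
    ∃ (m : ℕ) (γ : ℕ → V → Fin k), γ 0 = α ∧ γ m = β ∧ RecolWalk D k m γ ∧ m ≤ L.length ∧
      ∀ v, Nat.count (fun i => γ i v ≠ γ (i + 1) v) m ≤ recolCount v L := by
  induction hL with
  | @nil α hα => exact ⟨0, fun _ => α, rfl, rfl, ⟨fun _ _ => hα, by simp⟩, by simp, by simp⟩
  | @cons α β u c L hα _ ih =>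
    obtain ⟨m, γ, h0, hm, hwalk, hlen, hcount⟩ := ih
    by_cases huc : α u = c
    · refine ⟨m, γ, ?_, hm, hwalk, hlen.trans (by simp), fun v => (hcount v).trans ?_⟩
      · rw [h0, ← huc, Function.update_eq_self]
      · exact (List.sublist_cons_self _ _).countP_le
    · have hadj : RecolAdj α (γ 0) := by
        refine ⟨u, by simpa [h0] using huc, fun w hw => ?_⟩
        rw [h0, Function.update_of_ne hw]
      refine ⟨m + 1, fun i => Nat.casesOn i α γ, rfl, hm, hwalk.cons hα hadj,
        Nat.succ_le_succ hlen, fun v => ?_⟩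
      rw [Nat.count_succ', recolCount, List.countP_cons]
      refine add_le_add (hcount v) ?_
      rcases eq_or_ne u v with rfl | huv
      · simp [ite_le_one]
      · simp [h0, Function.update_of_ne huv.symm]

end Walks

/-- If `k ≥ 2 δ*_min(D) + 2`, then between any two `k`-dicolourings of `D` there
is a redicolouring sequence of length at most `(δ*_min(D) + 1) · n` in which,
moreover, every vertex is recoloured at most `δ*_min(D) + 1` times. -/
theorem linear_diameter {V : Type} [Fintype V] (D : V → V → Prop)
    (hloopless : Irreflexive D) (d k : ℕ)
    (hd : ∀ S : Set V, S.Nonempty → ∃ v ∈ S, min (outDegOn D S v) (inDegOn D S v) ≤ d)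
    (hk : 2 * d + 2 ≤ k)
    (α β : V → Fin k) (hα : IsDicolouring D k α) (hβ : IsDicolouring D k β) :
    ∃ (m : ℕ) (γ : ℕ → V → Fin k),
      γ 0 = α ∧ γ m = β ∧ RecolWalk D k m γ ∧
      m ≤ (d + 1) * Fintype.card V ∧
      ∀ v : V, {i : ℕ | i < m ∧ γ i v ≠ γ (i + 1) v}.ncard ≤ d + 1 := by
  classical
  rw [← inducedOn_univ D] at hα hβ
  obtain ⟨L, hL, hcount, -⟩ :=
    exists_recolSeq_inducedOn hloopless hd hk Set.univ hα hβ fun u hu => (hu (Set.mem_univ u)).elim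
  rw [inducedOn_univ] at hL
  obtain ⟨m, γ, h0, hm, hwalk, hlen, hγ⟩ := hL.exists_recolWalk
  refine ⟨m, γ, h0, hm, hwalk, ?_, fun v => ?_⟩
  · calc m ≤ L.length := hlen
      _ = ∑ v, recolCount v L := length_eq_sum_recolCount L
      _ ≤ ∑ _v : V, (d + 1) := Finset.sum_le_sum fun v _ => hcount v
      _ = (d + 1) * Fintype.card V := by simp [mul_comm]
  · rw [ncard_setOf_lt_and_eq_count]
    exact (hγ v).trans (hcount v)
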